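/- Let λ_i, λ_j, λ_k > 0 with λ_i + λ_j > λ_k and min(λ_i, λ_j) ≤ λ_k ≤ max(λ_i, λ_j), and let f_λ denote the density of the exponential distribution with rate λ. Then ∫₀^∞ (f_{λ_j}(x)/f_{λ_k}(x)) · f_{λ_i}(x) dx ≤ 1. In particular, when the cluster representative k is chosen as the hypothesis of minimal rate (equivalently, maximal mean 1/λ) in hypothesis i's cluster, so that λ_k ≤ λ_i, and the hypothesis j outside the cluster satisfies λ_j ≤ λ_k, the clustering condition holds. -/

import Mathlib

open MeasureTheory

/-- Density of the exponential distribution with rate `l`. -/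
noncomputable def expDensity (l x : ℝ) : ℝ :=
  if 0 ≤ x then l * Real.exp (-(l * x)) else 0

/-!
Reweighting the density of rate `a` by the likelihood ratio of rates `b` and `c` tilts it into a
multiple of the density of rate `a + b - c`, so the integral is `a * b / (c * (a + b - c))`. The
numbers `c` and `a + b - c` have the same sum as `a` and `b`; if `c` lies between `a` and `b` they
are closer together, so their product is at least `a * b`.
-/

theorem mul_le_mul_add_sub_of_mem_uIcc {R : Type*} [CommRing R] [LinearOrder R] [IsOrderedRing R]
    {a b c : R} (hc : c ∈ Set.uIcc a b) : a * b ≤ c * (a + b - c) := by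
  have key : 0 ≤ (c - a) * (b - c) := by
    rcases Set.mem_uIcc.mp hc with ⟨hac, hcb⟩ | ⟨hbc, hca⟩
    · exact mul_nonneg (sub_nonneg.mpr hac) (sub_nonneg.mpr hcb)
    · exact mul_nonneg_of_nonpos_of_nonpos (sub_nonpos.mpr hca) (sub_nonpos.mpr hbc)
  rw [← sub_nonneg]
  calc 0 ≤ (c - a) * (b - c) := key
    _ = c * (a + b - c) - a * b := by ring

theorem expDensity_of_nonneg (l : ℝ) {x : ℝ} (hx : 0 ≤ x) :
    expDensity l x = l * Real.exp (-(l * x)) :=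
  if_pos hx

theorem expDensity_of_neg (l : ℝ) {x : ℝ} (hx : x < 0) : expDensity l x = 0 :=
  if_neg hx.not_ge

theorem integral_Ioi_expDensity {l : ℝ} (hl : 0 < l) :
    ∫ x in Set.Ioi (0 : ℝ), expDensity l x = 1 := by
  calc ∫ x in Set.Ioi (0 : ℝ), expDensity l x
      = ∫ x in Set.Ioi (0 : ℝ), l * Real.exp (-l * x) :=
        setIntegral_congr_fun measurableSet_Ioi fun x hx => by
          rw [expDensity_of_nonneg l (le_of_lt hx), neg_mul]
    _ = l * (-Real.exp (-l * 0) / -l) := by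
        rw [integral_const_mul, integral_exp_mul_Ioi (neg_neg_of_pos hl)]
    _ = 1 := by
        rw [mul_zero, Real.exp_zero, neg_div_neg_eq, mul_one_div_cancel hl.ne']

theorem expDensity_div_mul_expDensity {a b c : ℝ} (h : a + b - c ≠ 0) (x : ℝ) :
    expDensity b x / expDensity c x * expDensity a x =
      a * b / (c * (a + b - c)) * expDensity (a + b - c) x := by
  rcases lt_or_ge x 0 with hx | hx
  · simp only [expDensity_of_neg _ hx, mul_zero]
  · have exp_tilt : Real.exp (-((a + b - c) * x)) =
        Real.exp (-(b * x)) / Real.exp (-(c * x)) * Real.exp (-(a * x)) := by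
      rw [← Real.exp_sub, ← Real.exp_add]
      ring_nf
    simp only [expDensity_of_nonneg _ hx, exp_tilt]
    field_simp

theorem integral_Ioi_expDensity_div_mul_expDensity {a b c : ℝ} (h : c < a + b) :
    ∫ x in Set.Ioi (0 : ℝ), expDensity b x / expDensity c x * expDensity a x =
      a * b / (c * (a + b - c)) := by
  have rate_pos : 0 < a + b - c := sub_pos.mpr h
  simp only [expDensity_div_mul_expDensity rate_pos.ne']
  rw [integral_const_mul, integral_Ioi_expDensity rate_pos, mul_one]

/-- For exponential densities with rates `λ_i, λ_j, λ_k` with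
`λ_i + λ_j > λ_k` and `min(λ_i, λ_j) ≤ λ_k ≤ max(λ_i, λ_j)`, the clustering
condition `E_{f_i}[f_j/f_k] ≤ 1` holds.  In particular this covers the
maximal-mean representative rule, where `λ_j ≤ λ_k ≤ λ_i`. -/
theorem exp_clustering_condition_holds
    (li lj lk : ℝ) (hli : 0 < li) (hlj : 0 < lj) (hlk : 0 < lk)
    (hsum : lk < li + lj)
    (hmin : min li lj ≤ lk) (hmax : lk ≤ max li lj) :
    ∫ x in Set.Ioi (0 : ℝ),
        (expDensity lj x / expDensity lk x) * expDensity li x ≤ 1 := by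
  rw [integral_Ioi_expDensity_div_mul_expDensity hsum,
    div_le_one (mul_pos hlk (sub_pos.mpr hsum))]
  exact mul_le_mul_add_sub_of_mem_uIcc ⟨hmin, hmax⟩
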